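/- arXiv:1907.00548 — 3 statements merged into one kernel-verified Lean document; each statement's English description precedes it below -/
import Mathlib

section
/- Let k, ℓ, g be positive integers with g ∈ G_k(ℓ), let p be a nonnegative integer, and let σ be a permutation of a finite set of cardinality ℓ·g·p with cycle type (ℓ)^{gp}. Then: (i) there exists at least one permutation τ with τ^k = σ and cycle type (gℓ)^p; and (ii) every permutation τ with τ^k = σ and cycle type (gℓ)^p is an even permutation if p·(ℓg+1) is even, and is an odd permutation if p·(ℓg+1) is odd. -/
open Finset

/-- Cycle lengths of a permutation, counting fixed points as cycles of length 1. -/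
def fullCycleType {α : Type*} [Fintype α] [DecidableEq α] (σ : Equiv.Perm α) : Multiset ℕ :=
  σ.cycleType + Multiset.replicate (Fintype.card α - σ.support.card) 1

/-- `G_k(ℓ) = {g ≥ 1 : gcd(gℓ, k) = g}`. -/
def Gset (k ℓ : ℕ) : Set ℕ := {g | 1 ≤ g ∧ Nat.gcd (g * ℓ) k = g}

theorem fct_aux {α : Type*} [Fintype α] [DecidableEq α] (f : Equiv.Perm α) (m q : ℕ)
    (hm : 0 < m) (hc : Fintype.card α = q * m)
    (h : ∀ (x : α) (j : ℕ), (f ^ j) x = x ↔ m ∣ j) :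
    fullCycleType f = Multiset.replicate q m := by
  have hall : ∀ a ∈ fullCycleType f, a = m := by
    intro a ha
    rw [fullCycleType, Multiset.mem_add] at ha
    rcases ha with ha | ha
    · rw [Equiv.Perm.cycleType_def, Multiset.mem_map] at ha
      obtain ⟨c, hcf, rfl⟩ := ha
      have hcf' : c ∈ f.cycleFactorsFinset := hcf
      have hcyc := (Equiv.Perm.mem_cycleFactorsFinset_iff.1 hcf').1
      obtain ⟨x, hx⟩ := hcyc.nonempty_support
      have hcx := Equiv.Perm.cycle_is_cycleOf hx hcf'
      have key : ∀ j, c.support.card ∣ j ↔ m ∣ j := by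
        intro j
        rw [← hcyc.orderOf, orderOf_dvd_iff_pow_eq_one,
          hcyc.pow_eq_one_iff' (Equiv.Perm.mem_support.1 hx), ← h x j, hcx,
          Equiv.Perm.cycleOf_pow_apply_self]
      exact Nat.dvd_antisymm ((key _).2 dvd_rfl) ((key _).1 dvd_rfl)
    · have h1 := Multiset.eq_of_mem_replicate ha
      have h2 : Fintype.card α - f.support.card ≠ 0 := by
        intro h0
        simp [h0] at ha
      have : ∃ x, x ∉ f.support := by
        by_contra! hcon
        apply h2
        rw [Finset.eq_univ_iff_forall.2 hcon, Finset.card_univ, Nat.sub_self]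
      obtain ⟨x, hx⟩ := this
      rw [Equiv.Perm.notMem_support] at hx
      have := (h x 1).1 (by simpa using hx)
      rw [h1, Nat.dvd_one.1 this]
  have hrep := Multiset.eq_replicate_card.2 hall
  have hsum : (fullCycleType f).sum = Fintype.card α := by
    rw [fullCycleType, Multiset.sum_add, Equiv.Perm.sum_cycleType, Multiset.sum_replicate]
    have := Finset.card_le_univ f.support
    simp only [smul_eq_mul, mul_one]
    omega
  rw [hrep, Multiset.sum_replicate, hc, smul_eq_mul] at hsum
  rw [hrep, Nat.eq_of_mul_eq_mul_right hm hsum]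

theorem sign_aux {α : Type*} [Fintype α] [DecidableEq α] (f : Equiv.Perm α) :
    Equiv.Perm.sign f = (-1) ^ ((fullCycleType f).sum + (fullCycleType f).card) := by
  rw [Equiv.Perm.sign_of_cycleType, fullCycleType]
  simp only [Multiset.sum_add, Multiset.card_add, Multiset.sum_replicate, Multiset.card_replicate,
    smul_eq_mul, mul_one]
  generalize Fintype.card α - f.support.card = r
  rw [show ∀ a b : ℕ, a + r + (b + r) = (a + b) + 2 * r by intros; ring, pow_add _ _ (2 * r),
    pow_mul]
  simp

theorem conj_aux {α : Type*} [Fintype α] [DecidableEq α] (f g : Equiv.Perm α)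
    (h : fullCycleType f = fullCycleType g) : IsConj f g := by
  rw [Equiv.Perm.partition_eq_of_isConj]
  apply Nat.Partition.ext
  rw [Equiv.Perm.parts_partition, Equiv.Perm.parts_partition]
  exact h

theorem exists_aux {α : Type*} [Fintype α] (n p : ℕ) (hn : 0 < n)
    (hc : Fintype.card α = p * n) :
    ∃ f : Equiv.Perm α, ∀ (x : α) (j : ℕ), (f ^ j) x = x ↔ n ∣ j := by
  haveI : NeZero n := ⟨hn.ne'⟩
  have e : α ≃ Fin p × ZMod n := Fintype.equivOfCardEq (by simp [hc, ZMod.card])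
  let t : Equiv.Perm (Fin p × ZMod n) := Equiv.prodCongr (Equiv.refl _) (Equiv.addRight 1)
  let f : Equiv.Perm α := e.trans (t.trans e.symm)
  have hf : ∀ (j : ℕ) (x : α), e ((f ^ j) x) = ((e x).1, (e x).2 + (j : ZMod n)) := by
    intro j
    induction j with
    | zero => intro x; simp
    | succ j ih =>
      intro x
      rw [pow_succ, Equiv.Perm.mul_apply, ih]
      simp [f, t, add_assoc, add_comm]
  refine ⟨f, fun x j => ?_⟩
  rw [← e.apply_eq_iff_eq, hf, ← ZMod.natCast_eq_zero_iff]
  simp [Prod.ext_iff]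

/-- **Proposition (signo-pari).** Let `k, ℓ, g` be positive integers with `g ∈ G_k(ℓ)`, let
`p ≥ 0`, and let `σ` be a permutation of a set of cardinality `ℓ·g·p` with cycle type
`(ℓ)^{gp}`. Then (i) `σ` has a `k`th root of cycle type `(gℓ)^p`, and (ii) every `k`th root
of `σ` of cycle type `(gℓ)^p` is even if `p(ℓg+1)` is even and odd if `p(ℓg+1)` is odd. -/
theorem exists_root_and_sign_of_cycleType {α : Type*} [Fintype α] [DecidableEq α]
    (k ℓ g : ℕ) (hk : 0 < k) (hℓ : 0 < ℓ) (hg : 0 < g) (hgG : g ∈ Gset k ℓ) (p : ℕ)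
    (hcard : Fintype.card α = ℓ * (g * p))
    (σ : Equiv.Perm α) (hσ : fullCycleType σ = Multiset.replicate (g * p) ℓ) :
    (∃ τ : Equiv.Perm α, τ ^ k = σ ∧ fullCycleType τ = Multiset.replicate p (g * ℓ)) ∧
    ∀ τ : Equiv.Perm α, τ ^ k = σ → fullCycleType τ = Multiset.replicate p (g * ℓ) →
      (Even (p * (ℓ * g + 1)) → Equiv.Perm.sign τ = 1) ∧
      (Odd (p * (ℓ * g + 1)) → Equiv.Perm.sign τ = -1) := by
  obtain ⟨-, hgcd⟩ := hgG
  have hn : 0 < g * ℓ := Nat.mul_pos hg hℓ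
  constructor
  · obtain ⟨f, hf⟩ := exists_aux (α := α) (g * ℓ) p hn (by rw [hcard]; ring)
    have hfk : fullCycleType (f ^ k) = Multiset.replicate (g * p) ℓ := by
      apply fct_aux _ _ _ hℓ (by rw [hcard]; ring)
      intro x j
      rw [← pow_mul, hf]
      obtain ⟨k', rfl⟩ : g ∣ k := by
        have := Nat.gcd_dvd_right (g * ℓ) k
        rwa [hgcd] at this
      rw [Nat.gcd_mul_left] at hgcd
      have hco : Nat.Coprime ℓ k' := Nat.eq_of_mul_eq_mul_left hg (by rw [hgcd, mul_one])
      rw [mul_assoc, Nat.mul_dvd_mul_iff_left hg]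
      exact hco.dvd_mul_left
    obtain ⟨c, hcc⟩ := isConj_iff.1 (conj_aux _ _ (hfk.trans hσ.symm))
    refine ⟨c * f * c⁻¹, by rw [conj_pow, hcc], ?_⟩
    apply fct_aux _ _ _ hn (by rw [hcard]; ring)
    intro x j
    rw [conj_pow, ← hf (c⁻¹ x) j, Equiv.Perm.mul_apply, Equiv.Perm.mul_apply,
      Equiv.Perm.eq_inv_iff_eq]
  · intro τ _ hτ
    have hs := sign_aux τ
    rw [hτ, Multiset.sum_replicate, Multiset.card_replicate, smul_eq_mul,
      show p * (g * ℓ) + p = p * (ℓ * g + 1) by ring] at hs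
    exact ⟨fun h => by rw [hs, h.neg_one_pow], fun h => by rw [hs, h.neg_one_pow]⟩
end

section
/- Fix positive integers k and ℓ, and a nonnegative integer c. For every permutation σ of a finite set of cardinality ℓ·c with cycle type (ℓ)^c, re_k(σ) − ro_k(σ) = ∑_{p} c! · ∏_{g ∈ G_k(ℓ)} (−1)^{p(g)(ℓg+1)} · ℓ^{p(g)(g−1)} / (g^{p(g)} · p(g)!), where the sum is over all functions p : G_k(ℓ) → ℕ with ∑_{g ∈ G_k(ℓ)} g·p(g) = c, and the equality is in ℚ. -/
open Finset

/-- The number of even `k`th roots of `σ`. -/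
def nEvenRoots {α : Type*} [Fintype α] [DecidableEq α] (k : ℕ) (σ : Equiv.Perm α) : ℕ :=
  (Finset.univ.filter fun τ : Equiv.Perm α => τ ^ k = σ ∧ Equiv.Perm.sign τ = 1).card

/-- The number of odd `k`th roots of `σ`. -/
def nOddRoots {α : Type*} [Fintype α] [DecidableEq α] (k : ℕ) (σ : Equiv.Perm α) : ℕ :=
  (Finset.univ.filter fun τ : Equiv.Perm α => τ ^ k = σ ∧ Equiv.Perm.sign τ = -1).card

theorem free_of_type {α : Type*} [Fintype α] [DecidableEq α] (ℓ c : ℕ)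
    (σ : Equiv.Perm α) (hσ : fullCycleType σ = Multiset.replicate c ℓ) (x : α) :
    orderOf (σ.cycleOf x) = ℓ := by
  by_cases hx : σ x = x
  · have h1 : 1 ∈ fullCycleType σ := by
      unfold fullCycleType
      rw [Multiset.mem_add]
      right
      rw [Multiset.mem_replicate]
      refine ⟨?_, rfl⟩
      have : σ.support.card < Fintype.card α := by
        apply Finset.card_lt_univ_of_notMem (x := x)
        simpa using hx
      omega
    rw [hσ] at h1
    rw [(Equiv.Perm.cycleOf_eq_one_iff σ).2 hx, orderOf_one]
    exact Multiset.eq_of_mem_replicate h1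
  · have h1 : orderOf (σ.cycleOf x) ∈ fullCycleType σ := by
      unfold fullCycleType
      rw [Multiset.mem_add]
      left
      rw [Equiv.Perm.cycleType_def, Multiset.mem_map]
      refine ⟨σ.cycleOf x, ?_, ?_⟩
      · exact Equiv.Perm.cycleOf_mem_cycleFactorsFinset_iff.2 (by simpa using hx)
      · exact ((Equiv.Perm.isCycle_cycleOf σ hx).orderOf).symm
    rw [hσ] at h1
    exact Multiset.eq_of_mem_replicate h1

theorem pow_fix_iff {α : Type*} [Fintype α] [DecidableEq α] 
    (σ : Equiv.Perm α) (x : α) (n : ℕ) :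
    (σ ^ n) x = x ↔ orderOf (σ.cycleOf x) ∣ n := by
  rw [orderOf_dvd_iff_pow_eq_one]
  constructor
  · intro h
    by_cases hx : σ x = x
    · rw [(Equiv.Perm.cycleOf_eq_one_iff σ).2 hx, one_pow]
    · rw [(Equiv.Perm.isCycle_cycleOf σ hx).pow_eq_one_iff]
      refine ⟨x, by simpa using hx, ?_⟩
      rw [Equiv.Perm.cycleOf_pow_apply_self, h]
  · intro h
    rw [← Equiv.Perm.cycleOf_pow_apply_self, h]; rfl

theorem exists_coord {α : Type*} [Fintype α] [DecidableEq α]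
    (ℓ : ℕ) (hℓ : 0 < ℓ) (c : ℕ)
    (hcard : Fintype.card α = ℓ * c)
    (σ : Equiv.Perm α) (hσ : fullCycleType σ = Multiset.replicate c ℓ) :
    ∃ e : (ZMod ℓ × Fin c) ≃ α, ∀ a i, σ (e (a, i)) = e (a + 1, i) := by
  classical
  have : NeZero ℓ := ⟨hℓ.ne'⟩
  have hper : ∀ x n, (σ ^ n) x = x ↔ ℓ ∣ n := fun x n => by
    rw [pow_fix_iff, free_of_type ℓ c σ hσ]
  have hmod : ∀ x (m n : ℕ), (m : ZMod ℓ) = n → (σ ^ m) x = (σ ^ n) x := by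
    have : ∀ x m, (σ ^ m) x = (σ ^ (m % ℓ)) x := by
      intro x m
      conv_lhs => rw [← Nat.mod_add_div m ℓ, pow_add, Equiv.Perm.mul_apply, 
        (hper x _).2 (dvd_mul_right _ _)]
    intro x m n h
    rw [this x m, this x n, (ZMod.natCast_eq_natCast_iff' m n ℓ).1 h]
  let Q := Quotient (Equiv.Perm.SameCycle.setoid σ)
  let f : ZMod ℓ × Q → α := fun p => (σ ^ p.1.val) p.2.out
  have hq : ∀ (q : Q) n, (Quotient.mk (Equiv.Perm.SameCycle.setoid σ) ((σ ^ n) q.out)) = q := by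
    intro q n
    conv_rhs => rw [← Quotient.out_eq q]
    apply Quotient.sound
    change σ.SameCycle _ _
    exact Equiv.Perm.sameCycle_pow_left.2 (Equiv.Perm.SameCycle.refl _ _)
  have hinj0 : ∀ x (a b : ZMod ℓ), a.val ≤ b.val → (σ ^ a.val) x = (σ ^ b.val) x → a = b := by
    intro x a b hab h
    obtain ⟨d, hd⟩ := Nat.exists_eq_add_of_le hab
    rw [hd, pow_add, Equiv.Perm.mul_apply] at h
    have h2 := (hper x d).1 ((σ ^ a.val).injective h).symm
    have h3 : (d : ZMod ℓ) = 0 := (ZMod.natCast_eq_zero_iff _ _).2 h2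
    have h4 : ((b.val : ℕ) : ZMod ℓ) = a := by rw [hd]; simp [h3]
    simpa using h4.symm
  have hf : Function.Bijective f := by
    constructor
    · rintro ⟨a, q⟩ ⟨b, r⟩ h
      have hqr : q = r := by
        rw [← hq q a.val, ← hq r b.val]
        exact congrArg _ h
      subst hqr
      have : a = b := by
        rcases le_total a.val b.val with h1 | h1
        · exact hinj0 _ _ _ h1 h
        · exact (hinj0 _ _ _ h1 h.symm).symm
      rw [this]
    · intro x
      have h1 : σ.SameCycle (Quotient.mk (Equiv.Perm.SameCycle.setoid σ) x).out x :=
        Quotient.exact (s := Equiv.Perm.SameCycle.setoid σ) (Quotient.out_eq _)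
      obtain ⟨n, hn⟩ := h1.exists_nat_pow_eq
      refine ⟨((n : ZMod ℓ), Quotient.mk (Equiv.Perm.SameCycle.setoid σ) x), ?_⟩
      change (σ ^ _) _ = x
      rw [hmod _ _ n (by simp)]
      exact hn
  have hQ : Fintype.card Q = c := by
    have h := Fintype.card_congr (Equiv.ofBijective f hf)
    rw [hcard, Fintype.card_prod, ZMod.card] at h
    exact Nat.eq_of_mul_eq_mul_left hℓ h
  let eq : Fin c ≃ Q := (Fintype.equivFinOfCardEq hQ).symm
  refine ⟨((Equiv.refl _).prodCongr eq).trans (Equiv.ofBijective f hf), ?_⟩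
  intro a i
  change σ ((σ ^ a.val) _) = (σ ^ (a+1).val) _
  rw [← Equiv.Perm.mul_apply, ← pow_succ']
  exact hmod _ _ _ (by simp)

def wr {ℓ : ℕ} {β : Type*} (π : Equiv.Perm β) (v : β → ZMod ℓ) : Equiv.Perm (ZMod ℓ × β) :=
  Equiv.prodCongrRight (fun _ => π) * Equiv.prodCongrLeft (fun i => Equiv.addRight (v i))

theorem wr_apply {ℓ : ℕ} {β : Type*} (π : Equiv.Perm β) (v : β → ZMod ℓ) (a : ZMod ℓ) (i : β) :
    wr π v (a, i) = (a + v i, π i) := rfl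

theorem wr_pow_apply {ℓ : ℕ} {β : Type*} (π : Equiv.Perm β) (v : β → ZMod ℓ) (k : ℕ)
    (a : ZMod ℓ) (i : β) :
    (wr π v ^ k) (a, i) = (a + ∑ j ∈ range k, v ((π ^ j) i), (π ^ k) i) := by
  induction k with
  | zero => simp
  | succ k ih =>
    rw [pow_succ', Equiv.Perm.mul_apply, ih, wr_apply, Finset.sum_range_succ, pow_succ' π,
      Equiv.Perm.mul_apply, add_assoc]

def chi (ℓ : ℕ) [NeZero ℓ] (a : ZMod ℓ) : ℤˣ := Equiv.Perm.sign (Equiv.addRight a)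

theorem chi_add (ℓ : ℕ) [NeZero ℓ] (a b : ZMod ℓ) : chi ℓ (a + b) = chi ℓ a * chi ℓ b := by
  unfold chi
  rw [← map_mul]
  congr 1
  ext x
  simp [add_comm a b, add_assoc]

theorem chi_zero (ℓ : ℕ) [NeZero ℓ] : chi ℓ 0 = 1 := by
  unfold chi
  simp

theorem chi_sum (ℓ : ℕ) [NeZero ℓ] {ι : Type*} (s : Finset ι) (f : ι → ZMod ℓ) : 
    chi ℓ (∑ i ∈ s, f i) = ∏ i ∈ s, chi ℓ (f i) := by
  classical
  induction s using Finset.induction_on with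
  | empty => simp [chi_zero]
  | insert a s ha ih => rw [sum_insert ha, prod_insert ha, chi_add, ih]

theorem chi_nsmul (ℓ : ℕ) [NeZero ℓ] (n : ℕ) (a : ZMod ℓ) : chi ℓ (n * a) = chi ℓ a ^ n := by
  induction n with
  | zero => simp [chi_zero]
  | succ n ih => rw [Nat.cast_succ, add_mul, one_mul, chi_add, ih, pow_succ]

theorem chi_one (ℓ : ℕ) [NeZero ℓ] : chi ℓ 1 = (-1) ^ (ℓ + 1) := by
  unfold chi
  obtain _ | n := ℓ
  · exact absurd rfl (NeZero.ne 0)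
  · let E : ZMod (n+1) ≃ Fin (n+1) := Equiv.refl (Fin (n+1))
    have h1 := Equiv.Perm.sign_eq_sign_of_equiv (Equiv.addRight (1 : ZMod (n+1)))
      (finRotate (n+1)) E (by
        intro x
        rw [finRotate_apply]
        rfl)
    rw [h1, sign_finRotate]
    simp [pow_succ]

theorem chi_of_mul (ℓ : ℕ) [NeZero ℓ] (n : ℕ) (a : ZMod ℓ) (h : n * a = 1) :
    chi ℓ a = (-1) ^ (ℓ + 1) := by
  have h1 := chi_nsmul ℓ n a
  rw [h] at h1
  rw [← chi_one]
  rcases Int.units_eq_one_or (chi ℓ a) with h2 | h2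
  · rw [h1, h2, one_pow]
  · rcases Int.units_eq_one_or (chi ℓ 1) with h3 | h3
    · have h4 := chi_nsmul ℓ a.val 1
      rw [h3] at h4
      simpa [h3] using h4
    · rw [h2, h3]

theorem sign_wr {ℓ : ℕ} [NeZero ℓ] {β : Type*} [Fintype β] [DecidableEq β] 
    (π : Equiv.Perm β) (v : β → ZMod ℓ) : 
    Equiv.Perm.sign (wr π v) = Equiv.Perm.sign π ^ ℓ * ∏ i, chi ℓ (v i) := by
  unfold wr chi
  rw [map_mul, Equiv.Perm.sign_prodCongrRight, Equiv.Perm.sign_prodCongrLeft]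
  simp [ZMod.card]

theorem wr_inj {ℓ : ℕ} {β : Type*} : 
    Function.Injective (fun p : Equiv.Perm β × (β → ZMod ℓ) => wr p.1 p.2) := by
  rintro ⟨π, v⟩ ⟨π', v'⟩ h
  have h1 : ∀ i, (0 + v i, π i) = (0 + v' i, π' i) := fun i => by
    rw [← wr_apply, ← wr_apply]; exact congrFun (congrArg _ h) _
  simp only [zero_add, Prod.mk.injEq] at h1
  exact Prod.ext (Equiv.ext fun i => (h1 i).2) (funext fun i => (h1 i).1)

theorem wr_surj {ℓ : ℕ} [NeZero ℓ] {β : Type*} [Finite β] (τ : Equiv.Perm (ZMod ℓ × β))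
    (h : ∀ a i, τ (a + 1, i) = ((τ (a, i)).1 + 1, (τ (a, i)).2)) :
    ∃ p : Equiv.Perm β × (β → ZMod ℓ), wr p.1 p.2 = τ := by
  have h1 : ∀ (n : ℕ) b i, τ (b + n, i) = ((τ (b, i)).1 + n, (τ (b, i)).2) := by
    intro n b i
    induction n with
    | zero => simp
    | succ n ih => rw [Nat.cast_succ, ← add_assoc, h, ih, add_assoc]
  have h2 : ∀ a b i, τ (b + a, i) = ((τ (b, i)).1 + a, (τ (b, i)).2) := by
    intro a b i
    have := h1 a.val b i
    simpa using this
  have hs : Function.Surjective (fun i => (τ (0, i)).2) := by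
    intro j
    obtain ⟨⟨a, i⟩, hai⟩ := τ.surjective (0, j)
    refine ⟨i, ?_⟩
    have := h2 (-a) a i
    rw [hai, add_neg_cancel] at this
    simp [this]
  refine ⟨(Equiv.ofBijective _ (Finite.surjective_iff_bijective.1 hs), fun i => (τ (0, i)).1), ?_⟩
  ext1 ⟨a, i⟩
  rw [wr_apply]
  have := h2 a 0 i
  rw [zero_add] at this
  rw [this, add_comm]
  rfl

theorem sum_roots_eq {ℓ : ℕ} [NeZero ℓ] {β α : Type*} [Fintype β] [DecidableEq β] 
    [Fintype α] [DecidableEq α] (σ : Equiv.Perm α)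
    (e : (ZMod ℓ × β) ≃ α) (he : ∀ a i, σ (e (a, i)) = e (a + 1, i)) (k : ℕ) :
    (∑ τ : Equiv.Perm α, if τ ^ k = σ then (Equiv.Perm.sign τ : ℤ) else 0) =
    ∑ π : Equiv.Perm β, (Equiv.Perm.sign π : ℤ) ^ ℓ * ∑ v : β → ZMod ℓ, 
      if (∀ i, (π ^ k) i = i ∧ ∑ j ∈ range k, v ((π ^ j) i) = 1) then 
      ∏ i, (chi ℓ (v i) : ℤ) else 0 := by
  simp_rw [Finset.mul_sum]
  rw [← Finset.sum_product', Finset.univ_product_univ]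
  symm
  refine Finset.sum_of_injOn (fun p => e.permCongr (wr p.1 p.2)) ?_ ?_ ?_ ?_
  · exact (e.permCongr.injective.comp wr_inj).injOn
  · intro _ _; simp
  · intro τ _ hτ
    rw [if_neg]
    intro hk
    apply hτ
    have hc : ∀ x, τ (σ x) = σ (τ x) := by
      intro x
      rw [← hk, ← Equiv.Perm.mul_apply, ← Equiv.Perm.mul_apply, ← pow_succ, ← pow_succ']
    obtain ⟨p, hp⟩ := wr_surj (e.permCongr.symm τ) (by
      intro a i
      apply e.injective
      have := he (e.symm (τ (e (a,i)))).1 (e.symm (τ (e (a,i)))).2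
      rw [← he]
      simp at this ⊢
      rw [← he, hc])
    refine ⟨p, by simp, ?_⟩
    simp only [hp]
    exact e.permCongr.apply_symm_apply τ
  · rintro ⟨π, v⟩ _
    have hpow : (e.permCongr (wr π v)) ^ k = e.permCongr (wr π v ^ k) := by
      have := map_pow e.permCongrHom (wr π v) k
      exact this.symm
    have hiff : (e.permCongr (wr π v)) ^ k = σ ↔ 
        (∀ i, (π ^ k) i = i ∧ ∑ j ∈ range k, v ((π ^ j) i) = 1) := by
      rw [hpow]
      constructor
      · intro h i
        have h1 := he 0 i
        rw [← h] at h1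
        simp [wr_pow_apply] at h1
        exact ⟨h1.2, h1.1⟩
      · intro h
        ext x
        obtain ⟨⟨a, i⟩, rfl⟩ := e.surjective x
        rw [he]
        simp [wr_pow_apply, (h i).1, (h i).2]
    simp only [hiff, Equiv.Perm.sign_permCongr, sign_wr]
    split_ifs <;> simp

theorem card_sum_eq {A ι : Type*} [AddCommGroup A] [Fintype A] [DecidableEq A] [Fintype ι]
    [DecidableEq ι] [Nonempty ι] (t : A) :
    #{u : ι → A | ∑ i, u i = t} = Fintype.card A ^ (Fintype.card ι - 1) := by
  let f : (ι → A) →+ A := ∑ i, Pi.evalAddMonoidHom (fun _ => A) i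
  have hf : ∀ u, f u = ∑ i, u i := fun u => by simp [f]
  have hsurj : ∀ a, a ∈ Set.range f := by
    intro a
    obtain ⟨i0⟩ := ‹Nonempty ι›
    refine ⟨Pi.single i0 a, ?_⟩
    rw [hf]; simp
  have h1 : ∀ s : A, #{u : ι → A | f u = s} = #{u : ι → A | f u = t} := fun s =>
    AddMonoidHom.card_fiber_eq_of_mem_range f (hsurj s) (hsurj t)
  have h2 : Fintype.card (ι → A) = ∑ s : A, #{u : ι → A | f u = s} := by
    rw [← Finset.card_univ]
    exact Finset.card_eq_sum_card_fiberwise (fun _ _ => by simp)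
  simp only [h1, Finset.sum_const, Finset.card_univ, Fintype.card_fun, smul_eq_mul] at h2
  have h3 : Fintype.card ι = Fintype.card ι - 1 + 1 := by
    have := Fintype.card_pos (α := ι); omega
  rw [h3, pow_succ, mul_comm] at h2
  have := Nat.eq_of_mul_eq_mul_left (Fintype.card_pos) h2
  simp only [hf] at this
  exact this.symm

theorem gcd_cond (k ℓ m : ℕ) (hm : 0 < m) : 
    Nat.gcd (m * ℓ) k = m ↔ m ∣ k ∧ Nat.Coprime (k / m) ℓ := by
  constructor
  · intro h
    have hd : m ∣ k := by rw [← h]; exact Nat.gcd_dvd_right _ _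
    obtain ⟨d, rfl⟩ := hd
    rw [Nat.gcd_mul_left] at h
    refine ⟨dvd_mul_right _ _, ?_⟩
    rw [Nat.mul_div_cancel_left _ hm, Nat.coprime_comm]
    exact Nat.eq_of_mul_eq_mul_left hm (by simpa using h)
  · rintro ⟨⟨d, rfl⟩, h⟩
    rw [Nat.mul_div_cancel_left _ hm, Nat.coprime_comm] at h
    rw [Nat.gcd_mul_left, h.gcd_eq_one, mul_one]

def wt (k ℓ m : ℕ) : ℤ :=
  if Nat.gcd (m * ℓ) k = m then (-1) ^ (ℓ + 1) * (ℓ : ℤ) ^ (m - 1) else 0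

theorem sum_fiber (k ℓ : ℕ) [NeZero ℓ] {ι : Type*} [Fintype ι] [DecidableEq ι] [Nonempty ι] :
    (∑ u : ι → ZMod ℓ, if (Fintype.card ι ∣ k ∧ 
      ((k / Fintype.card ι : ℕ) : ZMod ℓ) * ∑ i, u i = 1) then (chi ℓ (∑ i, u i) : ℤ) else 0) =
      wt k ℓ (Fintype.card ι) := by
  unfold wt
  simp only [gcd_cond _ _ _ (Fintype.card_pos (α := ι))]
  have h0 : ∀ u : ι → ZMod ℓ, (if (Fintype.card ι ∣ k ∧ 
      ((k / Fintype.card ι : ℕ) : ZMod ℓ) * ∑ i, u i = 1) then (chi ℓ (∑ i, u i) : ℤ) else 0) = 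
      (if (Fintype.card ι ∣ k ∧ 
      ((k / Fintype.card ι : ℕ) : ZMod ℓ) * ∑ i, u i = 1) then (-1) ^ (ℓ + 1) else 0) := by
    intro u
    split_ifs with h
    · rw [chi_of_mul ℓ _ _ h.2]; simp
    · rfl
  simp only [h0]
  split_ifs with h
  · simp only [h.1, true_and]
    have h1 : ∀ a : ZMod ℓ, ((k / Fintype.card ι : ℕ) : ZMod ℓ) * a = 1 ↔ 
       a = (ZMod.unitOfCoprime _ h.2)⁻¹ := by
      intro a
      rw [← ZMod.coe_unitOfCoprime _ h.2]
      constructor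
      · intro h3
        exact (Units.inv_eq_of_mul_eq_one_right h3).symm
      · rintro rfl
        simp
    simp only [h1]
    rw [← Finset.sum_filter, Finset.sum_const, card_sum_eq, ZMod.card]
    simp [mul_comm]
  · apply Finset.sum_eq_zero
    intro u _
    rw [if_neg]
    rintro ⟨h1, h2⟩
    apply h ⟨h1, ?_⟩
    exact (ZMod.isUnit_iff_coprime _ _).1 (IsUnit.of_mul_eq_one _ h2)

theorem cycOn {β : Type*} (π : Equiv.Perm β) (i : β) : π.IsCycleOn {x | π.SameCycle i x} := by
  refine ⟨π.bijOn fun x => ?_, fun x hx y hy => ?_⟩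
  · exact Equiv.Perm.sameCycle_apply_right
  · exact Equiv.Perm.SameCycle.trans (Equiv.Perm.SameCycle.symm hx) hy

theorem cyc_sum {β A : Type*} [Fintype β] [DecidableEq β] [AddCommMonoid A] (π : Equiv.Perm β) 
    (i : β) (s : Finset β) (hs : ∀ x, x ∈ s ↔ π.SameCycle i x) (v : β → A) (m : ℕ) :
    ∑ j ∈ range (#s * m), v ((π ^ j) i) = m • ∑ x ∈ s, v x := by
  have hi : i ∈ s := (hs i).2 (Equiv.Perm.SameCycle.refl _ _)
  have hc : π.IsCycleOn s := by
    have : (s : Set β) = {x | π.SameCycle i x} := by ext x; simp [hs]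
    rw [this]
    exact cycOn π i
  induction m with
  | zero => simp
  | succ m ih =>
    rw [mul_add, mul_one, Finset.sum_range_add, ih, succ_nsmul]
    congr 1
    have h1 : ∀ j, (π ^ (#s * m + j)) i = (π ^ j) i := by
      intro j
      rw [add_comm, pow_add, Equiv.Perm.mul_apply, (hc.pow_apply_eq hi).2 (dvd_mul_right _ _)]
    simp only [h1]
    refine Finset.sum_nbij (fun j => (π ^ j) i) ?_ ?_ ?_ (fun _ _ => rfl)
    · intro j _
      exact (hs _).2 (Equiv.Perm.sameCycle_pow_right.2 (Equiv.Perm.SameCycle.refl _ _))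
    · intro a ha b hb h
      simp at ha hb
      have := (hc.pow_apply_eq_pow_apply hi).1 h
      exact Nat.ModEq.eq_of_lt_of_lt this ha hb
    · intro x hx
      obtain ⟨n, hn, h⟩ := hc.exists_pow_eq hi hx
      exact ⟨n, by simpa using hn, h⟩

theorem cyc_fix {β : Type*} [Fintype β] [DecidableEq β] (π : Equiv.Perm β) 
    (i : β) (s : Finset β) (hs : ∀ x, x ∈ s ↔ π.SameCycle i x) (k : ℕ) :
    (π ^ k) i = i ↔ #s ∣ k := by
  have hi : i ∈ s := (hs i).2 (Equiv.Perm.SameCycle.refl _ _)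
  have hc : π.IsCycleOn s := by
    have : (s : Set β) = {x | π.SameCycle i x} := by ext x; simp [hs]
    rw [this]
    exact cycOn π i
  exact hc.pow_apply_eq hi

theorem root_inner_sum (k ℓ : ℕ) [NeZero ℓ] {β Q : Type*} [Fintype β] [DecidableEq β] 
    [Fintype Q] [DecidableEq Q] (π : Equiv.Perm β) (mk : β → Q) (hmk : Function.Surjective mk)
    (hm : ∀ x y, mk x = mk y ↔ π.SameCycle x y) :
    (∑ v : β → ZMod ℓ, 
      if (∀ i, (π ^ k) i = i ∧ ∑ j ∈ range k, v ((π ^ j) i) = 1) then 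
      ∏ i, (chi ℓ (v i) : ℤ) else 0) = ∏ q : Q, wt k ℓ #{x | mk x = q} := by
  let E : (β → ZMod ℓ) ≃ ((q : Q) → ({x // mk x = q} → ZMod ℓ)) :=
    { toFun := fun v q x => v x.1
      invFun := fun u b => u (mk b) ⟨b, rfl⟩
      left_inv := fun v => rfl
      right_inv := fun u => by funext q ⟨x, hx⟩; subst hx; rfl }
  have hne : ∀ q, Nonempty {x // mk x = q} := fun q => by
    obtain ⟨x, hx⟩ := hmk q; exact ⟨⟨x, hx⟩⟩
  have hcard : ∀ q, #{x | mk x = q} = Fintype.card {x // mk x = q} := fun q => 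
    (Fintype.card_subtype _).symm
  simp only [hcard, ← sum_fiber]
  rw [Finset.prod_univ_sum, Fintype.piFinset_univ]
  refine Fintype.sum_equiv E _ _ ?_
  intro v
  have hsum : ∀ q, ∑ i : {x // mk x = q}, E v q i = ∑ x with mk x = q, v x := fun q => by
    exact (Finset.sum_subtype _ (by simp) _).symm
  simp only [hsum]
  have hs : ∀ i, ∀ x, x ∈ (univ.filter fun x => mk x = mk i) ↔ π.SameCycle i x := by
    intro i x
    rw [Finset.mem_filter, ← hm]
    simp [eq_comm]
  have hiff : (∀ i, (π ^ k) i = i ∧ ∑ j ∈ range k, v ((π ^ j) i) = 1) ↔ 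
      ∀ q, (Fintype.card {x // mk x = q} ∣ k ∧ 
        ((k / Fintype.card {x // mk x = q} : ℕ) : ZMod ℓ) * ∑ x with mk x = q, v x = 1) := by
    rw [hmk.forall]
    refine forall_congr' fun i => ?_
    rw [cyc_fix π i _ (hs i), ← hcard]
    refine and_congr_right fun hd => ?_
    have := cyc_sum π i _ (hs i) v (k / #{x | mk x = mk i})
    rw [Nat.mul_div_cancel' hd] at this
    rw [this, nsmul_eq_mul]
  simp only [hiff]
  split_ifs with h
  · rw [← Finset.prod_fiberwise univ mk]
    refine Finset.prod_congr rfl fun q _ => ?_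
    rw [if_pos (h q), chi_sum]
    simp
  · push Not at h
    obtain ⟨q, hq⟩ := h
    symm
    apply Finset.prod_eq_zero (Finset.mem_univ q)
    rw [if_neg]
    tauto

theorem fullCycleType_eq {β Q : Type*} [Fintype β] [DecidableEq β] 
    [Fintype Q] [DecidableEq Q] (π : Equiv.Perm β) (mk : β → Q) (hmk : Function.Surjective mk)
    (hm : ∀ x y, mk x = mk y ↔ π.SameCycle x y) :
    fullCycleType π = (univ : Finset Q).val.map (fun q => #{x | mk x = q}) := by
  obtain ⟨r, hr⟩ := hmk.hasRightInverse
  have hr : ∀ q, mk (r q) = q := hr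
  have h0 : (univ : Finset Q).val = (univ.filter fun q => π (r q) ≠ r q).val + 
      (univ.filter fun q => ¬ (π (r q) ≠ r q)).val := by
    rw [Finset.filter_val, Finset.filter_val, Multiset.filter_add_not]
  unfold fullCycleType
  rw [h0, Multiset.map_add, Equiv.Perm.cycleType_def]
  congr 1
  · have h1 : π.cycleFactorsFinset = 
        (univ.filter fun q => π (r q) ≠ r q).image (fun q => π.cycleOf (r q)) := by
      ext f
      simp only [Finset.mem_image, Finset.mem_filter, Finset.mem_univ, true_and]
      constructor
      · intro hf
        obtain ⟨x, hx⟩ := (Equiv.Perm.mem_cycleFactorsFinset_iff.1 hf).1.nonempty_support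
        have hfx := Equiv.Perm.cycle_is_cycleOf hx hf
        have hsame : π.SameCycle (r (mk x)) x := (hm _ _).1 (hr _)
        refine ⟨mk x, ?_, ?_⟩
        · have : x ∈ π.support := Equiv.Perm.mem_cycleFactorsFinset_support_le hf hx
          intro hh
          exact (Equiv.Perm.mem_support.1 this) (hsame.apply_eq_self_iff.1 hh)
        · rw [hfx, hsame.cycleOf_eq]
      · rintro ⟨q, hq, rfl⟩
        exact Equiv.Perm.cycleOf_mem_cycleFactorsFinset_iff.2 (by simpa using hq)
    have hinj : Set.InjOn (fun q => π.cycleOf (r q)) 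
        (univ.filter fun q => π (r q) ≠ r q : Finset Q) := by
      intro q hq q' hq' h
      simp only [Finset.coe_filter, Finset.mem_univ, true_and, Set.mem_ofPred_eq] at hq hq' h
      rw [← hr q, ← hr q', hm]
      rw [Equiv.Perm.sameCycle_iff_cycleOf_eq_of_mem_support] 
      · exact h
      · simpa using hq
      · simpa using hq'
    rw [h1, Finset.image_val_of_injOn hinj, Multiset.map_map]
    refine Multiset.map_congr rfl fun q hq => ?_
    have hq : π (r q) ≠ r q := by simpa using hq
    simp only [Function.comp]
    congr 1
    ext y
    rw [Equiv.Perm.mem_support_cycleOf_iff' hq, ← hm, hr]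
    simp [eq_comm]
  · symm
    rw [Multiset.eq_replicate]
    constructor
    · rw [Multiset.card_map]
      change #(univ.filter fun q => ¬ (π (r q) ≠ r q)) = _
      rw [← Finset.card_compl]
      refine Finset.card_nbij r ?_ ?_ ?_
      · intro q hq; simpa using hq
      · intro q _ q' _ h
        rw [← hr q, ← hr q', h]
      · intro x hx
        have hx : π x = x := by simpa using hx
        have hsame : π.SameCycle x (r (mk x)) := ((hm _ _).1 (hr _)).symm
        have h2 : r (mk x) = x := by
          exact (hsame.eq_of_left hx).symm
        refine ⟨mk x, ?_, h2⟩
        simp [h2, hx]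
    · intro b hb
      rw [Multiset.mem_map] at hb
      obtain ⟨q, hq, rfl⟩ := hb
      have hq : π (r q) = r q := by simpa using hq
      rw [Finset.card_eq_one]
      refine ⟨r q, ?_⟩
      ext y
      simp only [Finset.mem_filter, Finset.mem_univ, true_and, Finset.mem_singleton]
      constructor
      · intro h
        have : π.SameCycle (r q) y := by rw [← hm, hr, h]
        exact (this.eq_of_left hq).symm
      · rintro rfl; exact hr q

theorem sign_full {β : Type*} [Fintype β] [DecidableEq β] (π : Equiv.Perm β) :
    (Equiv.Perm.sign π : ℤ) = ((fullCycleType π).map (fun m => (-1 : ℤ) ^ (m + 1))).prod := by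
  unfold fullCycleType
  rw [Multiset.map_add, Multiset.prod_add, Equiv.Perm.sign_of_cycleType']
  simp only [Multiset.map_replicate, Multiset.prod_replicate]
  rw [← Units.coeHom_apply, map_multiset_prod, Multiset.map_map]
  simp only [one_add_one_eq_two, even_two, Even.neg_pow, one_pow, mul_one]
  congr 1
  refine Multiset.map_congr rfl fun n _ => ?_
  simp [pow_succ]

def WW (k ℓ m : ℕ) : ℤ :=
  if Nat.gcd (m * ℓ) k = m then (-1) ^ (ℓ * m + 1) * (ℓ : ℤ) ^ (m - 1) else 0

theorem wt_full (k ℓ : ℕ) {β : Type*} [Fintype β] [DecidableEq β] (π : Equiv.Perm β) :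
    (Equiv.Perm.sign π : ℤ) ^ ℓ * ((fullCycleType π).map (wt k ℓ)).prod =
      ((fullCycleType π).map (WW k ℓ)).prod := by
  rw [sign_full, ← Multiset.prod_map_pow, ← Multiset.prod_map_mul]
  congr 1
  refine Multiset.map_congr rfl fun m _ => ?_
  unfold wt WW
  split_ifs
  · rw [← mul_assoc, ← pow_mul, ← pow_add]
    congr 1
    rw [show (m + 1) * ℓ + (ℓ + 1) = ℓ * m + 1 + 2 * ℓ by ring, pow_add, pow_mul]
    simp
  · simp

theorem full_iff {c : ℕ} (π : Equiv.Perm (Fin c)) (m : Multiset ℕ) (h1 : ∀ a ∈ m, 1 ≤ a)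
    (hsum : m.sum = c) :
    fullCycleType π = m ↔ π.cycleType = m.filter (2 ≤ ·) := by
  constructor
  · rintro rfl
    unfold fullCycleType
    rw [Multiset.filter_add, Multiset.filter_eq_self.2 fun a ha => 
      Equiv.Perm.two_le_of_mem_cycleType ha, Multiset.filter_eq_nil.2, add_zero]
    intro a ha
    rw [Multiset.eq_of_mem_replicate ha]; norm_num
  · intro h
    have h2 : m.filter (fun a => ¬ 2 ≤ a) = Multiset.replicate (m.filter (fun a => ¬ 2 ≤ a)).card 1 := by
      rw [Multiset.eq_replicate]
      refine ⟨rfl, fun b hb => ?_⟩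
      rw [Multiset.mem_filter] at hb
      have := h1 b hb.1
      omega
    have h3 := Multiset.filter_add_not (2 ≤ ·) m
    have h4 : (m.filter (2 ≤ ·)).sum + (m.filter (fun a => ¬ 2 ≤ a)).card = c := by
      rw [← hsum]
      conv_rhs => rw [← h3, Multiset.sum_add, h2, Multiset.sum_replicate]
      simp
    unfold fullCycleType
    rw [← Equiv.Perm.sum_cycleType, h, Fintype.card_fin]
    conv_rhs => rw [← h3, h2]
    congr 2
    omega

theorem card_full {c : ℕ} (m : Multiset ℕ) (h1 : ∀ a ∈ m, 1 ≤ a)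
    (hsum : m.sum = c) : 
    #{π : Equiv.Perm (Fin c) | fullCycleType π = m} * 
      (m.prod * ∏ n ∈ m.toFinset, (m.count n).factorial) = c.factorial := by
  simp only [full_iff _ m h1 hsum]
  have h := Equiv.Perm.card_of_cycleType_mul_eq (α := Fin c) (m.filter (2 ≤ ·))
  have h3 := Multiset.filter_add_not (2 ≤ ·) m
  have h2 : m.filter (fun a => ¬ 2 ≤ a) = Multiset.replicate (m.count 1) 1 := by
    rw [← Multiset.filter_eq' m 1]
    refine Multiset.filter_congr fun a ha => ?_
    have := h1 a ha
    omega
  have h4 : (m.filter (2 ≤ ·)).sum + m.count 1 = c := by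
    rw [← hsum]
    conv_rhs => rw [← h3, Multiset.sum_add, h2, Multiset.sum_replicate]
    simp
  have h5 : (m.filter (2 ≤ ·)).prod = m.prod := by
    conv_rhs => rw [← h3, Multiset.prod_add, h2, Multiset.prod_replicate]
    simp
  rw [if_pos ⟨by rw [Fintype.card_fin]; omega, fun a ha => (Multiset.mem_filter.1 ha).2⟩, 
    Fintype.card_fin, h5, show c - (m.filter (2 ≤ ·)).sum = m.count 1 by omega] at h
  rw [← h]
  congr 1
  rw [mul_comm (m.count 1).factorial, mul_assoc]
  congr 1
  have h6 : ∏ n ∈ m.toFinset, (m.count n).factorial = 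
      ∏ n ∈ insert 1 (m.filter (2 ≤ ·)).toFinset, (m.count n).factorial := by
    apply Finset.prod_subset
    · intro a ha
      rw [Multiset.mem_toFinset] at ha
      have := h1 a ha
      simp [ha]
      omega
    · intro a _ ha
      rw [Multiset.mem_toFinset] at ha
      simp [Multiset.count_eq_zero_of_notMem ha]
  rw [h6, Finset.prod_insert (by simp)]
  congr 1
  refine Finset.prod_congr rfl fun n hn => ?_
  rw [Multiset.mem_toFinset, Multiset.mem_filter] at hn
  rw [Multiset.count_filter, if_pos hn.2]

def mp {G : Set ℕ} [Fintype G] (p : G → ℕ) : Multiset ℕ := 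
  ∑ g : G, Multiset.replicate (p g) (g : ℕ)

theorem mp_mem {G : Set ℕ} [Fintype G] (p : G → ℕ) (a : ℕ) (h : a ∈ mp p) : a ∈ G := by
  unfold mp at h
  rw [Multiset.mem_sum] at h
  obtain ⟨g, _, hg⟩ := h
  rw [Multiset.eq_of_mem_replicate hg]
  exact g.2

theorem mp_count {G : Set ℕ} [Fintype G] (p : G → ℕ) (g : G) : (mp p).count (g : ℕ) = p g := by
  classical
  unfold mp
  rw [Multiset.count_sum']
  rw [Finset.sum_eq_single g]
  · simp
  · intro b _ hb
    rw [Multiset.count_replicate, if_neg]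
    exact fun h => hb (Subtype.ext h)
  · simp

theorem mp_sum {G : Set ℕ} [Fintype G] (p : G → ℕ) : (mp p).sum = ∑ g : G, (g : ℕ) * p g := by
  unfold mp
  simp [Multiset.sum_sum, mul_comm]

theorem mp_prod {G : Set ℕ} [Fintype G] (p : G → ℕ) {R : Type*} [CommMonoid R] (f : ℕ → ℕ → R) 
    (hf : ∀ n, f n 0 = 1) :
    ∏ n ∈ (mp p).toFinset, f n ((mp p).count n) = ∏ g : G, f g (p g) := by
  classical
  have h1 : ∏ n ∈ (mp p).toFinset, f n ((mp p).count n) = 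
      ∏ n ∈ G.toFinset, f n ((mp p).count n) := by
    apply Finset.prod_subset
    · intro a ha
      rw [Multiset.mem_toFinset] at ha
      simpa using mp_mem p a ha
    · intro a _ ha
      rw [Multiset.mem_toFinset] at ha
      rw [Multiset.count_eq_zero_of_notMem ha, hf]
  rw [h1, Finset.prod_subtype G.toFinset (p := (· ∈ G)) (by simp)]
  refine Finset.prod_congr rfl fun g _ => ?_
  rw [mp_count]

theorem full_pos {c : ℕ} (π : Equiv.Perm (Fin c)) : (fullCycleType π).sum = c := by
  unfold fullCycleType
  have := Equiv.Perm.sum_cycleType_le π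
  rw [Multiset.sum_add, Multiset.sum_replicate, ← Equiv.Perm.sum_cycleType]
  simp at this ⊢
  omega

theorem sum_perm_eq {c : ℕ} (G : Set ℕ) [Fintype G] (hG : ∀ g ∈ G, 1 ≤ g) (W a : ℕ → ℚ)
    (hW : ∀ g ∈ G, W g = a g) (hW0 : ∀ g, g ∉ G → W g = 0)
    [Fintype {p : G → ℕ // ∑ g : G, (g : ℕ) * p g = c}] :
    ∑ π : Equiv.Perm (Fin c), ((fullCycleType π).map W).prod = 
    ∑ p : {p : G → ℕ // ∑ g : G, (g : ℕ) * p g = c}, (c.factorial : ℚ) * 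
      ∏ g : G, a g ^ p.1 g / ((g : ℚ) ^ p.1 g * ((p.1 g).factorial : ℚ)) := by
  classical
  have key : ∀ p : {p : G → ℕ // ∑ g : G, (g : ℕ) * p g = c}, (c.factorial : ℚ) * 
      ∏ g : G, a g ^ p.1 g / ((g : ℚ) ^ p.1 g * ((p.1 g).factorial : ℚ)) = 
      ∑ π : Equiv.Perm (Fin c), if fullCycleType π = mp p.1 then 
        ((fullCycleType π).map W).prod else 0 := by
    rintro ⟨p, hp⟩
    have h1 : ∀ π : Equiv.Perm (Fin c), (if fullCycleType π = mp p then 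
        ((fullCycleType π).map W).prod else 0) = (if fullCycleType π = mp p then 
        ((mp p).map W).prod else 0) := by
      intro π; split_ifs with h
      · rw [h]
      · rfl
    simp only [h1]
    rw [← Finset.sum_filter, Finset.sum_const, nsmul_eq_mul]
    have h2 := card_full (c := c) (mp p) (fun a ha => hG a (mp_mem p a ha)) 
      (by rw [mp_sum, hp])
    have h3 : (mp p).prod = ∏ g : G, (g : ℕ) ^ p g := by
      rw [← mp_prod p (fun n e => n ^ e) (by simp)]
      exact Finset.prod_multiset_count _
    have h4 : ((mp p).map W).prod = ∏ g : G, a g ^ p g := by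
      rw [Finset.prod_multiset_map_count, mp_prod p (fun n e => W n ^ e) (by simp)]
      exact Finset.prod_congr rfl fun g _ => by rw [hW g g.2]
    rw [h3, mp_prod p (fun n e => e.factorial) (by simp), ← Finset.prod_mul_distrib] at h2
    have h2' : (c.factorial : ℚ) = _ := congrArg (Nat.cast (R := ℚ)) h2.symm
    rw [h2', h4, Finset.prod_div_distrib]
    have h5 : ∏ g : G, ((g : ℚ) ^ p g * ((p g).factorial : ℚ)) ≠ 0 := by
      rw [Finset.prod_ne_zero_iff]
      intro g _
      have := hG g g.2
      positivity
    push_cast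
    field_simp
  simp only [key]
  rw [Finset.sum_comm]
  refine Finset.sum_congr rfl fun π _ => ?_
  by_cases hg : ∀ g ∈ fullCycleType π, g ∈ G
  · have hm : fullCycleType π = mp (fun g : G => (fullCycleType π).count (g : ℕ)) := by
      ext n
      by_cases hn : n ∈ G
      · exact (mp_count (fun g : G => (fullCycleType π).count (g : ℕ)) ⟨n, hn⟩).symm
      · rw [Multiset.count_eq_zero_of_notMem fun h => hn (hg _ h), 
          Multiset.count_eq_zero_of_notMem fun h => hn (mp_mem _ _ h)]
    have hs : ∑ g : G, (g : ℕ) * (fullCycleType π).count (g : ℕ) = c := by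
      rw [← mp_sum (fun g : G => (fullCycleType π).count (g : ℕ)), ← hm, full_pos]
    rw [Finset.sum_eq_single ⟨fun g : G => (fullCycleType π).count (g : ℕ), hs⟩]
    · rw [if_pos hm]
    · intro p _ hp
      rw [if_neg]
      intro h
      apply hp
      ext g
      simp only [h, mp_count]
    · simp
  · push Not at hg
    obtain ⟨g, hg1, hg2⟩ := hg
    have h0 : ((fullCycleType π).map W).prod = 0 := by
      rw [Multiset.prod_eq_zero_iff, Multiset.mem_map]
      exact ⟨g, hg1, hW0 g hg2⟩
    simp [h0]

/-- **Lemma (fungen-lfijo, explicit form).** Fix positive integers `k, ℓ` and `c ≥ 0`. For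
every permutation `σ` of a set of cardinality `ℓ·c` with cycle type `(ℓ)^c`,
`re_k(σ) − ro_k(σ)` equals the sum, over all functions `p : G_k(ℓ) → ℕ` with
`∑_{g ∈ G_k(ℓ)} g·p(g) = c`, of
`c! · ∏_{g ∈ G_k(ℓ)} (−1)^{p(g)(ℓg+1)} ℓ^{p(g)(g−1)} / (g^{p(g)} p(g)!)`. -/
theorem signed_root_count_eq_sum {α : Type*} [Fintype α] [DecidableEq α]
    (k ℓ : ℕ) (hk : 0 < k) (hℓ : 0 < ℓ) (c : ℕ)
    (hcard : Fintype.card α = ℓ * c)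
    (σ : Equiv.Perm α) (hσ : fullCycleType σ = Multiset.replicate c ℓ) :
    (nEvenRoots k σ : ℚ) - (nOddRoots k σ : ℚ)
      = ∑ᶠ p : {p : Gset k ℓ → ℕ // (∑ᶠ g : Gset k ℓ, (g : ℕ) * p g) = c},
          (c.factorial : ℚ) *
            ∏ᶠ g : Gset k ℓ,
              (-1 : ℚ) ^ (p.1 g * (ℓ * (g : ℕ) + 1)) * (ℓ : ℚ) ^ (p.1 g * ((g : ℕ) - 1)) /
                (((g : ℕ) : ℚ) ^ (p.1 g) * ((p.1 g).factorial : ℚ)) := by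
  classical
  have : NeZero ℓ := ⟨hℓ.ne'⟩
  have hfin : (Gset k ℓ).Finite := by
    refine (Set.finite_Iic k).subset fun g hg => ?_
    exact Nat.le_of_dvd hk (by rw [← hg.2]; exact Nat.gcd_dvd_right _ _)
  let _ : Fintype (Gset k ℓ) := hfin.fintype
  obtain ⟨e, he⟩ := exists_coord ℓ hℓ c hcard σ hσ
  have h1 : (nEvenRoots k σ : ℚ) - (nOddRoots k σ : ℚ) =
      ((∑ τ : Equiv.Perm α, if τ ^ k = σ then (Equiv.Perm.sign τ : ℤ) else 0 : ℤ) : ℚ) := by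
    unfold nEvenRoots nOddRoots
    rw [Finset.card_filter, Finset.card_filter]
    push_cast
    rw [← Finset.sum_sub_distrib]
    refine Finset.sum_congr rfl fun τ _ => ?_
    rcases Int.units_eq_one_or (Equiv.Perm.sign τ) with h | h <;> 
      by_cases h2 : τ ^ k = σ <;> simp [h, h2]
  have h2 : (∑ τ : Equiv.Perm α, if τ ^ k = σ then (Equiv.Perm.sign τ : ℤ) else 0) =
      ∑ π : Equiv.Perm (Fin c), ((fullCycleType π).map (WW k ℓ)).prod := by
    rw [sum_roots_eq σ e he k]
    refine Finset.sum_congr rfl fun π _ => ?_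
    have hm : ∀ x y, Quotient.mk (Equiv.Perm.SameCycle.setoid π) x = 
        Quotient.mk (Equiv.Perm.SameCycle.setoid π) y ↔ π.SameCycle x y := 
      fun x y => Quotient.eq
    rw [root_inner_sum k ℓ π _ Quotient.mk_surjective hm, ← wt_full,
      fullCycleType_eq π _ Quotient.mk_surjective hm, Multiset.map_map]
    rfl
  have hF : Finite {p : Gset k ℓ → ℕ // ∑ g : Gset k ℓ, (g : ℕ) * p g = c} := by
    refine Finite.of_injective (β := Gset k ℓ → Fin (c + 1)) 
      (fun p g => ⟨p.1 g, ?_⟩) ?_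
    · have h3 : (g : ℕ) * p.1 g ≤ c := by
        conv_rhs => rw [← p.2]
        exact Finset.single_le_sum (f := fun g : Gset k ℓ => (g : ℕ) * p.1 g) 
          (fun _ _ => Nat.zero_le _) (Finset.mem_univ g)
      have h4 := Nat.le_mul_of_pos_left (p.1 g) g.2.1
      omega
    · intro p q h
      ext g
      have := congrFun h g
      simpa using this
  let _ : Fintype {p : Gset k ℓ → ℕ // ∑ g : Gset k ℓ, (g : ℕ) * p g = c} := Fintype.ofFinite _
  have h5 := sum_perm_eq (c := c) (Gset k ℓ) (fun g hg => hg.1) (fun m => ((WW k ℓ m : ℤ) : ℚ))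
    (fun m => (-1) ^ (ℓ * m + 1) * (ℓ : ℚ) ^ (m - 1))
    (by
      intro g hg
      simp only [WW]
      rw [if_pos hg.2]
      push_cast
      rfl)
    (by
      intro g hg
      simp only [WW]
      rcases Nat.eq_zero_or_pos g with rfl | h0
      · rw [if_neg]
        · simp
        · simp; omega
      · rw [if_neg]
        · simp
        · exact fun h => hg ⟨h0, h⟩)
  rw [h1, h2]
  have h6 : ((∑ π : Equiv.Perm (Fin c), ((fullCycleType π).map (WW k ℓ)).prod : ℤ) : ℚ) = 
      ∑ π : Equiv.Perm (Fin c), 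
        ((fullCycleType π).map (fun m => ((WW k ℓ m : ℤ) : ℚ))).prod := by
    rw [Int.cast_sum]
    refine Finset.sum_congr rfl fun π _ => ?_
    exact (map_multiset_prod (Int.castRingHom ℚ) _).trans (by rw [Multiset.map_map]; rfl)
  rw [h6, h5, ← finsum_eq_sum_of_fintype]
  simp only [finprod_eq_prod_of_fintype]
  let E : {p : Gset k ℓ → ℕ // ∑ g : Gset k ℓ, (g : ℕ) * p g = c} ≃
      {p : Gset k ℓ → ℕ // ∑ᶠ g : Gset k ℓ, (g : ℕ) * p g = c} :=
    Equiv.subtypeEquivRight fun p => by rw [finsum_eq_sum_of_fintype]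
  refine finsum_eq_of_bijective E E.bijective fun p => ?_
  have hE : (E p).1 = p.1 := rfl
  rw [hE]
  congr 1
  refine Finset.prod_congr rfl fun g _ => ?_
  rw [mul_pow, ← pow_mul, ← pow_mul, mul_comm (p.1 g), mul_comm (p.1 g)]
end

section
/- Let k, ℓ be positive integers and c a nonnegative integer, and let σ be a permutation of a finite set of cardinality ℓ·c with cycle type (ℓ)^c. Then σ has a kth root (i.e., there exists a permutation τ of the same set with τ^k = σ) if and only if there exists a function x : G_k(ℓ) → ℕ with ∑_{g ∈ G_k(ℓ)} g·x(g) = c. -/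
open Finset

open Function in
theorem aux_dvd {α : Type*} (σ : Equiv.Perm α) (x : α) (n : ℕ) :
    (σ ^ n) x = x ↔ minimalPeriod σ x ∣ n := by
  rw [← isPeriodicPt_iff_minimalPeriod_dvd, IsPeriodicPt, IsFixedPt, Equiv.Perm.iterate_eq_pow]

theorem aux_cycleOf {α : Type*} [Fintype α] [DecidableEq α] (σ : Equiv.Perm α) (x : α)
    (hx : x ∈ σ.support) : (σ.cycleOf x).support.card = Function.minimalPeriod σ x := by
  have hx' : σ x ≠ x := Equiv.Perm.mem_support.1 hx
  have hc := Equiv.Perm.isCycle_cycleOf σ hx'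
  rw [← hc.orderOf]
  apply Nat.dvd_right_iff_eq.1
  intro n
  rw [← aux_dvd, orderOf_dvd_iff_pow_eq_one,
    hc.pow_eq_one_iff' (x := x) (by rw [Equiv.Perm.cycleOf_apply_self]; exact hx'),
    Equiv.Perm.cycleOf_pow_apply_self]

theorem aux_mem {α : Type*} [Fintype α] [DecidableEq α] (σ : Equiv.Perm α) (n : ℕ) :
    n ∈ fullCycleType σ ↔ ∃ x, Function.minimalPeriod σ x = n := by
  unfold fullCycleType
  rw [Multiset.mem_add, Multiset.mem_replicate, Equiv.Perm.cycleType_def, Multiset.mem_map]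
  constructor
  · rintro (⟨c, hc, rfl⟩ | ⟨h, rfl⟩)
    · have hc : c ∈ σ.cycleFactorsFinset := hc
      obtain ⟨x, hx⟩ := (Equiv.Perm.mem_cycleFactorsFinset_iff.1 hc).1.nonempty_support
      refine ⟨x, ?_⟩
      rw [← aux_cycleOf σ x (Equiv.Perm.mem_cycleFactorsFinset_support_le hc hx),
        ← Equiv.Perm.cycle_is_cycleOf hx hc]
      rfl
    · have : ∃ x, x ∉ σ.support := by
        by_contra! hcon
        apply h
        rw [Finset.eq_univ_iff_forall.2 hcon, Finset.card_univ, Nat.sub_self]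
      obtain ⟨x, hx⟩ := this
      exact ⟨x, Function.minimalPeriod_eq_one_iff_isFixedPt.2 (Equiv.Perm.notMem_support.1 hx)⟩
  · rintro ⟨x, rfl⟩
    by_cases hx : x ∈ σ.support
    · left
      exact ⟨σ.cycleOf x, Equiv.Perm.cycleOf_mem_cycleFactorsFinset_iff.2 hx, aux_cycleOf σ x hx⟩
    · right
      refine ⟨?_, Function.minimalPeriod_eq_one_iff_isFixedPt.2 (Equiv.Perm.notMem_support.1 hx)⟩
      have : σ.support.card < Fintype.card α := Finset.card_lt_univ_of_notMem hx
      omega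

theorem aux_sum {α : Type*} [Fintype α] [DecidableEq α] (σ : Equiv.Perm α) :
    (fullCycleType σ).sum = Fintype.card α := by
  unfold fullCycleType
  have := Finset.card_le_univ σ.support
  simp [Equiv.Perm.sum_cycleType]
  omega

theorem aux_cycleType {α : Type*} [Fintype α] [DecidableEq α] (σ : Equiv.Perm α) :
    σ.cycleType = (fullCycleType σ).filter (· ≠ 1) := by
  unfold fullCycleType
  rw [Multiset.filter_add, Multiset.filter_eq_self.2, Multiset.filter_eq_nil.2, add_zero]
  · intro a ha
    simp [Multiset.eq_of_mem_replicate ha]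
  · intro a ha
    exact (Equiv.Perm.one_lt_of_mem_cycleType ha).ne'

theorem aux_closure (k ℓ : ℕ) (hk : 0 < k) (c : ℕ) :
    c ∈ AddSubmonoid.closure (Gset k ℓ) ↔
      ∃ x : Gset k ℓ → ℕ, (∑ᶠ g : Gset k ℓ, (g : ℕ) * x g) = c := by
  have hfin : (Gset k ℓ).Finite := by
    refine (Set.finite_Iic k).subset ?_
    rintro g ⟨_, hg⟩
    rw [← hg]
    exact Nat.gcd_le_right _ hk
  haveI : Fintype (Gset k ℓ) := hfin.fintype
  rw [AddSubmonoid.mem_closure_iff_of_fintype]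
  simp only [finsum_eq_sum_of_fintype, smul_eq_mul, mul_comm, eq_comm (a := c)]

theorem aux_build (k ℓ : ℕ) (hk : 0 < k) (hℓ : 0 < ℓ) (c : ℕ)
    (hc : c ∈ AddSubmonoid.closure (Gset k ℓ)) :
    ∃ (β : Type) (_ : Fintype β) (τ : Equiv.Perm β), Fintype.card β = ℓ * c ∧
      ∀ x n, (τ ^ (k * n)) x = x ↔ ℓ ∣ n := by
  induction hc using AddSubmonoid.closure_induction with
  | mem g hg =>
    obtain ⟨h1, h2⟩ := hg
    have hpos : 0 < g * ℓ := Nat.mul_pos h1 hℓ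
    haveI : NeZero (g * ℓ) := ⟨hpos.ne'⟩
    refine ⟨ZMod (g * ℓ), inferInstance, Equiv.addRight 1, by rw [ZMod.card, mul_comm], ?_⟩
    intro x n
    have : (Equiv.addRight (1 : ZMod (g * ℓ)) ^ (k * n)) x = x + ((k * n : ℕ) : ZMod (g * ℓ)) := by
      simp
    rw [this, add_eq_left, ZMod.natCast_eq_zero_iff]
    obtain ⟨m, hm⟩ : g ∣ k := h2 ▸ Nat.gcd_dvd_right _ _
    have hcop : Nat.Coprime ℓ m := by
      rw [hm, Nat.gcd_mul_left] at h2
      exact Nat.eq_of_mul_eq_mul_left h1 (by rw [h2, mul_one])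
    rw [hm, mul_assoc, Nat.mul_dvd_mul_iff_left h1, hcop.dvd_mul_left]
  | zero => exact ⟨Empty, inferInstance, 1, by simp, fun x => x.elim⟩
  | add a b _ _ iha ihb =>
    obtain ⟨β, _, τ, h1, h2⟩ := iha
    obtain ⟨γ, _, υ, h3, h4⟩ := ihb
    refine ⟨β ⊕ γ, inferInstance, Equiv.Perm.sumCongr τ υ, by simp [h1, h3, mul_add], ?_⟩
    have : ∀ n, Equiv.Perm.sumCongr τ υ ^ n = Equiv.Perm.sumCongr (τ ^ n) (υ ^ n) := by
      intro n
      exact ((Equiv.Perm.sumCongrHom β γ).map_pow (τ, υ) n).symm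
    rintro (x | x) n
    · simp [this, h2]
    · simp [this, h4]

theorem has_root_iff_exists_solution {α : Type*} [Fintype α] [DecidableEq α]
    (k ℓ : ℕ) (hk : 0 < k) (hℓ : 0 < ℓ) (c : ℕ)
    (hcard : Fintype.card α = ℓ * c)
    (σ : Equiv.Perm α) (hσ : fullCycleType σ = Multiset.replicate c ℓ) :
    (∃ τ : Equiv.Perm α, τ ^ k = σ) ↔
      ∃ x : Gset k ℓ → ℕ, (∑ᶠ g : Gset k ℓ, (g : ℕ) * x g) = c := by
  rw [← aux_closure k ℓ hk]
  constructor
  · rintro ⟨τ, rfl⟩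
    have key : ∀ n ∈ fullCycleType τ, ∃ g ∈ Gset k ℓ, n = ℓ * g := by
      intro n hn
      obtain ⟨x, hx⟩ := (aux_mem τ n).1 hn
      have h1 : Function.minimalPeriod (τ ^ k) x = ℓ :=
        Multiset.eq_of_mem_replicate (hσ ▸ (aux_mem (τ ^ k) _).2 ⟨x, rfl⟩)
      rw [← Equiv.Perm.iterate_eq_pow, Function.minimalPeriod_iterate_eq_div_gcd hk.ne', hx] at h1
      have h2 : n = ℓ * n.gcd k := (Nat.div_eq_iff_eq_mul_left (Nat.gcd_pos_of_pos_right _ hk)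
        (Nat.gcd_dvd_left _ _)).1 h1
      refine ⟨n.gcd k, ⟨Nat.gcd_pos_of_pos_right _ hk, ?_⟩, h2⟩
      rw [mul_comm, ← h2]
    have hs := aux_sum τ
    rw [hcard] at hs
    have h3 : ((fullCycleType τ).map (· / ℓ)).sum = c := by
      apply Nat.eq_of_mul_eq_mul_left hℓ
      rw [← hs, ← Multiset.sum_map_mul_left]
      conv_rhs => rw [← Multiset.map_id (fullCycleType τ)]
      congr 1
      apply Multiset.map_congr rfl
      intro n hn
      obtain ⟨g, _, rfl⟩ := key n hn
      simp [Nat.mul_div_cancel_left _ hℓ]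
    rw [← h3]
    apply AddSubmonoid.multiset_sum_mem
    intro a ha
    obtain ⟨n, hn, rfl⟩ := Multiset.mem_map.1 ha
    obtain ⟨g, hg, rfl⟩ := key n hn
    rw [Nat.mul_div_cancel_left _ hℓ]
    exact AddSubmonoid.subset_closure hg
  · intro hc
    obtain ⟨β, _, τ, h1, h2⟩ := aux_build k ℓ hk hℓ c hc
    let e : β ≃ α := Fintype.equivOfCardEq (h1.trans hcard.symm)
    let τ' : Equiv.Perm α := e.permCongrHom τ
    have h3 : ∀ x n, (τ' ^ (k * n)) x = x ↔ ℓ ∣ n := by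
      intro x n
      rw [← h2 (e.symm x) n]
      have : τ' ^ (k * n) = e.permCongrHom (τ ^ (k * n)) := (map_pow _ _ _).symm
      rw [this]
      exact (e.eq_symm_apply).symm
    have h4 : fullCycleType (τ' ^ k) = Multiset.replicate c ℓ := by
      have h5 : ∀ n ∈ fullCycleType (τ' ^ k), n = ℓ := by
        intro n hn
        obtain ⟨x, rfl⟩ := (aux_mem _ _).1 hn
        apply Nat.dvd_right_iff_eq.1
        intro n
        rw [← aux_dvd, ← pow_mul, h3]
      have h6 := Multiset.eq_replicate_card.2 h5
      have h7 := aux_sum (τ' ^ k)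
      rw [h6, Multiset.sum_replicate, hcard, smul_eq_mul, mul_comm] at h7
      rw [h6, Nat.eq_of_mul_eq_mul_left hℓ h7]
    have h5 : IsConj (τ' ^ k) σ := by
      rw [Equiv.Perm.isConj_iff_cycleType_eq, aux_cycleType, aux_cycleType σ, h4, hσ]
    obtain ⟨π, hπ⟩ := isConj_iff.1 h5
    exact ⟨π * τ' * π⁻¹, by rw [conj_pow, hπ]⟩
end
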